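/- arXiv:1312.4928 — 3 statements merged into one kernel-verified Lean document; each statement's English description precedes it below -/
import Mathlib

section
/- For integers j ≥ 1 and d ≥ 0, the power sum S_d(q^j - 1) equals ℓ_{d+j-1} / (ℓ_{j-1} · ℓ_d^{q^j}). -/
/-!
Write `S_d(q ^ j - 1) = ∑ a(t) / a(t) ^ q ^ j` over monic `a` of degree `d`, and free the numerator
by replacing `a(t)` with `a(x)`. The result is a polynomial in `x` of degree at most `d`. It
vanishes at `x = t ^ q ^ (i + j)` for `i < d`: there it is the `q ^ j`-th power of
`∑ a(t) ^ (q ^ i - 1)`, a sum over `F ^ d` of a polynomial of too small a degree in the coefficients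
of `a` (`sum_monicVal_pow`). Its coefficient of `x ^ d` is `S_d(1) ^ q ^ j`. Hence
(`sum_monicVal_mul`) it equals `S_d(1) ^ q ^ j ∏ (x - t ^ q ^ (i + j))`, and at `x = t` the product
is `ℓ_{d+j-1} / ℓ_{j-1}`.

There remains `S_d(1) = 1 / ℓ_d` (`sum_monicVal_inv`). This is the logarithmic derivative at
`t ^ d` of the `F`-linear Carlitz polynomial `E_d(x) = ∏ (x - a)`, `deg a < d`. The sum
`∑ 1 / (x + a)` is computed by induction on `d` from the case of `F` itself (`sum_inv_shift`), using
`E_{d+1}(t ^ (d+1)) = (t ^ q ^ (d+1) - t) E_d(t ^ d) ^ q` (`carlitzE_mul`).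

The argument uses of `t` only that its powers are distinct, so it takes place in an arbitrary field
`L` containing `F`.
-/

open Polynomial Finset

noncomputable section

variable (F : Type) [Field F] [Fintype F]

/-- The element `t = 1/u` in `F((u))`, so that `F[t]` embeds in `F((1/t)) = F((u))`. -/
def tL : LaurentSeries F := (HahnSeries.single (-1) 1 : LaurentSeries F)

/-- The monic polynomial of degree `d` with lower-order coefficients `c`,
evaluated at `t` inside `F((1/t))`. -/
def mpoly (d : ℕ) (c : Fin d → F) : LaurentSeries F :=
  Polynomial.aeval (tL F) (X ^ d + ∑ i : Fin d, C (c i) * X ^ (i : ℕ))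

/-- Power sum `S_d(s) = Σ_{a monic of degree d} 1/a^s`. -/
def S (d s : ℕ) : LaurentSeries F :=
  ∑ c : Fin d → F, ((mpoly F d c)⁻¹) ^ s

/-- Truncated power sum `S_{<d}(s) = Σ_{e < d} S_e(s)`. -/
def Slt (d s : ℕ) : LaurentSeries F := ∑ e ∈ Finset.range d, S F e s

/-- `ℓ_d = ∏_{i=1}^d (t - t^{q^i})`. -/
def ell (d : ℕ) : LaurentSeries F :=
  ∏ i ∈ Finset.range d, (tL F - tL F ^ (Fintype.card F) ^ (i + 1))

/-- `[m] = t^{q^m} - t`. -/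
def br (m : ℕ) : LaurentSeries F := tL F ^ (Fintype.card F) ^ m - tL F

/-- Iterated power sums `S_d(s_1, ..., s_r)`. -/
def SIter : ℕ → List ℕ → LaurentSeries F
  | _, [] => 1
  | d, s :: rest => S F d s * ∑ e ∈ Finset.range d, SIter e rest

/-- Multizeta value `ζ(s_1, ..., s_r) = Σ_d S_d(s_1, ..., s_r)`. -/
def zetaM (l : List ℕ) : LaurentSeries F := ∑' d : ℕ, SIter F d l

end

section PowerSum

variable {F L : Type} [Field F] [Fintype F] [Field L] [Algebra F L]


/-- Logarithmic derivative of `X ^ q - X = ∏ (X - c)`, up to the sign change `c ↦ -c`. -/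
theorem sum_inv_add (z : L) (hz : z ^ Fintype.card F - z ≠ 0) :
    ∑ c : F, (z + algebraMap F L c)⁻¹ = -(z ^ Fintype.card F - z)⁻¹ := by
  have hs : (X ^ Fintype.card F - X : F[X]).Splits := by
    rw [Polynomial.splits_iff_card_roots, FiniteField.roots_X_pow_card_sub_X,
      FiniteField.X_pow_card_sub_X_natDegree_eq _ Fintype.one_lt_card]
    rfl
  have h := (hs.map (algebraMap F L)).eval_derivative_div_eval_of_ne_zero (x := z) (by simpa using hz)
  rw [hs.roots_map, FiniteField.roots_X_pow_card_sub_X] at h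
  have h0 : (Fintype.card F : L) = 0 := by
    rw [← map_natCast (algebraMap F L), FiniteField.cast_card_eq_zero, map_zero]
  simp only [derivative_sub, derivative_X_pow, h0, derivative_X, Polynomial.map_sub,
    Polynomial.map_pow, Polynomial.map_X, eval_sub, eval_pow, eval_X, eval_mul, eval_C, eval_one,
    zero_mul, zero_sub, one_div] at h
  rw [← Equiv.sum_comp (Equiv.neg F)]
  simp only [Equiv.neg_apply, map_neg, ← sub_eq_add_neg]
  rw [inv_eq_one_div, ← neg_div]
  rw [Multiset.map_map] at h
  exact h.symm

/-- The vanishing of `MvPolynomial.sum_eval_eq_zero`, for polynomials with coefficients in an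
extension `L` of `F` summed over the `F`-rational points only. -/
theorem sum_eval_eq_zero' {σ : Type} [Fintype σ] [DecidableEq σ] (f : MvPolynomial σ L)
    (h : f.totalDegree < (Fintype.card F - 1) * Fintype.card σ) :
    ∑ x : σ → F, MvPolynomial.eval (fun i => algebraMap F L (x i)) f = 0 := by
  simp only [MvPolynomial.eval_eq']
  rw [sum_comm]
  refine sum_eq_zero fun m hm => ?_
  obtain ⟨i, hi⟩ := f.exists_degree_lt _ h hm
  have h1 : ∑ x : σ → F, ∏ i, algebraMap F L (x i) ^ m i
      = ∏ i, ∑ y : F, algebraMap F L y ^ m i := by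
    rw [Finset.prod_univ_sum, Fintype.piFinset_univ]
  rw [← mul_sum, h1, prod_eq_zero (mem_univ i), mul_zero]
  simp_rw [← map_pow, ← map_sum, FiniteField.sum_pow_lt_card_sub_one F _ hi, map_zero]

/-- The monic polynomial `X ^ d + ∑ cᵢ X ^ i` of degree `d`, evaluated at `t`. The point `t` is a
parameter so that one polynomial can be evaluated at several points of `L`. -/
def monicVal (t : L) (d : ℕ) (c : Fin d → F) : L :=
  t ^ d + ∑ i : Fin d, c i • t ^ (i : ℕ)

theorem frob_pow_apply (k : ℕ) (x : L) :
    (FiniteField.frobeniusAlgHom F L ^ k) x = x ^ Fintype.card F ^ k := by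
  rw [AlgHom.coe_pow, FiniteField.coe_frobeniusAlgHom, pow_iterate]

/-- Frobenius powers fix the coefficients, so they act on `a(t)` by moving the point `t`. -/
theorem monicVal_pow (t : L) (d : ℕ) (c : Fin d → F) (k : ℕ) :
    monicVal t d c ^ Fintype.card F ^ k = monicVal (t ^ Fintype.card F ^ k) d c := by
  simp only [← frob_pow_apply (F := F), monicVal, map_add, map_sum, map_smul, map_pow]

/-- The exponent is `(q - 1)(1 + q + ⋯ + q ^ (i - 1))` and each `a ^ q ^ k` is affine in the
coefficients of `a`, so the summand has degree at most `i (q - 1) < d (q - 1)` in the `d`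
coefficients. -/
theorem sum_monicVal_pow (t : L) {d i : ℕ} (hi : i < d) :
    ∑ c : Fin d → F, monicVal t d c ^ (Fintype.card F ^ i - 1) = 0 := by
  set q := Fintype.card F with hq
  have hq1 : 1 < q := Fintype.one_lt_card
  let f : MvPolynomial (Fin d) L := ∏ k ∈ range i,
    (MvPolynomial.C ((t ^ q ^ k) ^ d) + ∑ m : Fin d, MvPolynomial.C ((t ^ q ^ k) ^ (m : ℕ)) *
      MvPolynomial.X m) ^ (q - 1)
  have hdeg : f.totalDegree < (q - 1) * Fintype.card (Fin d) := by
    rw [Fintype.card_fin]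
    refine lt_of_le_of_lt (b := (q - 1) * i) ?_ (Nat.mul_lt_mul_of_pos_left hi (by omega))
    refine (MvPolynomial.totalDegree_finsetProd _ _).trans ?_
    refine (sum_le_card_nsmul _ _ (q - 1) fun k _ => ?_).trans (by simp [mul_comm])
    refine (MvPolynomial.totalDegree_pow _ _).trans ?_
    refine (Nat.mul_le_mul_left _ (?_ : _ ≤ 1)).trans (mul_one _).le
    refine (MvPolynomial.totalDegree_add _ _).trans (max_le
      (by rw [MvPolynomial.totalDegree_C]; exact zero_le_one) ?_)
    refine MvPolynomial.totalDegree_finsetSum_le fun m _ => ?_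
    exact (MvPolynomial.totalDegree_mul _ _).trans
      (by rw [MvPolynomial.totalDegree_C, MvPolynomial.totalDegree_X])
  rw [← sum_eval_eq_zero' f hdeg]
  refine sum_congr rfl fun c _ => ?_
  have hf : MvPolynomial.eval (fun m => algebraMap F L (c m)) f
      = ∏ k ∈ range i, (monicVal t d c ^ q ^ k) ^ (q - 1) := by
    simp only [f, map_prod, map_pow, map_add, map_sum, map_mul, MvPolynomial.eval_C,
      MvPolynomial.eval_X, hq, monicVal_pow]
    simp only [monicVal, Algebra.smul_def, mul_comm]
  rw [hf]
  simp_rw [← pow_mul]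
  rw [prod_pow_eq_pow_sum, ← sum_mul, Nat.geomSum_eq hq1,
    Nat.div_mul_cancel (by simpa using Nat.sub_dvd_pow_sub_pow q 1 i)]

/-- The Carlitz polynomial function `E_d(x) = ∏ (x - a(t))`, the product over all `a` of degree
`< d`, defined by its recursion `E_{d+1} = E_d ^ q - E_d(t ^ d) ^ (q - 1) E_d`, which makes its
`F`-linearity part of the definition. -/
def carlitzE (F : Type) {L : Type} [Field F] [Fintype F] [Field L] [Algebra F L] (t : L) :
    ℕ → L →ₗ[F] L
  | 0 => LinearMap.id
  | d + 1 => (FiniteField.frobeniusAlgHom F L).toLinearMap ∘ₗ carlitzE F t d -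
      LinearMap.mulLeft F (carlitzE F t d (t ^ d) ^ (Fintype.card F - 1)) ∘ₗ carlitzE F t d

theorem carlitzE_succ (t x : L) (d : ℕ) : carlitzE F t (d + 1) x = carlitzE F t d x ^ Fintype.card F
    - carlitzE F t d (t ^ d) ^ (Fintype.card F - 1) * carlitzE F t d x := by
  simp [carlitzE]

theorem carlitzE_pow (t : L) {k d : ℕ} (h : k < d) : carlitzE F t d (t ^ k) = 0 := by
  have hq : Fintype.card F ≠ 0 := Fintype.card_ne_zero
  induction d with
  | zero => omega
  | succ d ih =>
    rw [carlitzE_succ]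
    rcases Nat.lt_succ_iff_lt_or_eq.1 h with h | rfl
    · rw [ih h, zero_pow hq, mul_zero, sub_zero]
    · rw [pow_sub_one_mul hq, sub_self]

/-- Carlitz's relation `E_{d+1}(t x) = t E_{d+1}(x) + [d+1] E_d(x) ^ q`, together with its value at
`x = t ^ d`, which computes `D_{d+1} = E_{d+1}(t ^ (d+1))` as `[d+1] D_d ^ q`. -/
theorem carlitzE_mul (t x : L) (d : ℕ) :
    carlitzE F t (d + 1) (t * x) = t * carlitzE F t (d + 1) x
        + (t ^ Fintype.card F ^ (d + 1) - t) * carlitzE F t d x ^ Fintype.card F ∧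
    carlitzE F t (d + 1) (t ^ (d + 1))
      = (t ^ Fintype.card F ^ (d + 1) - t) * carlitzE F t d (t ^ d) ^ Fintype.card F := by
  set q := Fintype.card F with hqd
  have hq : q ≠ 0 := Fintype.card_ne_zero
  have key : ∀ d, (∀ x, carlitzE F t (d + 1) (t * x) = t * carlitzE F t (d + 1) x
        + (t ^ q ^ (d + 1) - t) * carlitzE F t d x ^ q) → carlitzE F t (d + 1) (t ^ (d + 1))
      = (t ^ q ^ (d + 1) - t) * carlitzE F t d (t ^ d) ^ q := by
    intro d h
    rw [pow_succ' t d, h, carlitzE_pow t (Nat.lt_succ_self d), mul_zero, zero_add]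
  refine (fun h => ⟨h x, key d h⟩) ?_
  clear x
  induction d with
  | zero =>
    intro x
    simp only [carlitzE_succ, ← hqd]
    simp only [carlitzE, LinearMap.id_apply, pow_zero, one_pow, zero_add, pow_one]
    ring
  | succ d ih =>
    intro x
    have hadd : ∀ a b : L, (a + b) ^ q = a ^ q + b ^ q := fun a b =>
      map_add (FiniteField.frobeniusAlgHom F L) a b
    have hsub : ∀ a b : L, (a - b) ^ q = a ^ q - b ^ q := fun a b =>
      map_sub (FiniteField.frobeniusAlgHom F L) a b
    have hδ := key d ih
    have h1 := carlitzE_succ (F := F) t x d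
    rw [carlitzE_succ t (t * x) (d + 1), carlitzE_succ t x (d + 1), ih, hδ]
    rw [← hqd] at h1 ⊢
    generalize carlitzE F t (d + 1) x = e1 at *
    generalize carlitzE F t d x = e0 at *
    generalize carlitzE F t d (t ^ d) = δ at *
    have h2 : e1 ^ q = (e0 ^ q) ^ q - (δ ^ q) ^ (q - 1) * e0 ^ q := by
      rw [h1, hsub, mul_pow]; ring
    have h3 : (t ^ q ^ (d + 1) - t) ^ (q - 1) * (t ^ q ^ (d + 1) - t)
        = t ^ q ^ (d + 1 + 1) - t ^ q := by
      rw [pow_sub_one_mul hq, hsub, ← pow_mul, ← pow_succ]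
    have h4 : t ^ q ^ (d + 1 + 1) = (t ^ q ^ (d + 1)- t) ^ q + t ^ q := by
      rw [hsub, ← pow_mul, ← pow_succ]; ring
    rw [hadd, mul_pow, mul_pow, mul_pow, h4, ← pow_sub_one_mul hq (t ^ q ^ (d + 1)- t)]
    generalize t ^ q ^ (d + 1)- t = b
    linear_combination (-b ^ (q - 1) * b) * h2

/-- `ℓ_d` with `t` an element of an arbitrary field; at `tL F` it is `ell F d` by `rfl`. -/
def ellVal (F : Type) {L : Type} [Field F] [Fintype F] [Field L] (t : L) (d : ℕ) : L :=
  ∏ i ∈ range d, (t - t ^ (Fintype.card F) ^ (i + 1))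

theorem pow_sub_ne {F L : Type} [Field F] [Fintype F] [Field L] {t : L}
    (ht : Function.Injective fun n : ℕ => t ^ n) (d : ℕ) :
    t ^ Fintype.card F ^ (d + 1) - t ≠ 0 := by
  intro h
  have := @ht (Fintype.card F ^ (d + 1)) 1 (by simpa [sub_eq_zero] using h)
  exact absurd this (Nat.one_lt_pow (by omega) Fintype.one_lt_card).ne'

theorem ellVal_ne {F L : Type} [Field F] [Fintype F] [Field L] {t : L}
    (ht : Function.Injective fun n : ℕ => t ^ n) (d : ℕ) :
    ellVal F t d ≠ 0 :=
  prod_ne_zero_iff.2 fun i _ h => pow_sub_ne (F := F) ht i (by rw [← neg_sub, h, neg_zero])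

theorem carlitzE_self_ne {t : L} (ht : Function.Injective fun n : ℕ => t ^ n) (d : ℕ) :
    carlitzE F t d (t ^ d) ≠ 0 := by
  induction d with
  | zero => simp [carlitzE]
  | succ d ih =>
    rw [(carlitzE_mul t 0 d).2]
    exact mul_ne_zero (pow_sub_ne ht d) (pow_ne_zero _ ih)

/-- Logarithmic derivative of `E_d`: the constant `E_d'` equals `D_d / ℓ_d`, where
`D_d = E_d(t ^ d)`. -/
theorem sum_inv_shift {t : L} (ht : Function.Injective fun n : ℕ => t ^ n) (d : ℕ) (x : L)
    (hx : carlitzE F t d x ≠ 0) :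
    ∑ c : Fin d → F, (x + ∑ i : Fin d, c i • t ^ (i : ℕ))⁻¹ =
      carlitzE F t d (t ^ d) / (ellVal F t d * carlitzE F t d x) := by
  have hq : Fintype.card F ≠ 0 := Fintype.card_ne_zero
  induction d generalizing x with
  | zero => simp [carlitzE, ellVal]
  | succ d ih =>
    set δ := carlitzE F t d (t ^ d) with hδ
    have hδ0 : δ ≠ 0 := carlitzE_self_ne ht d
    -- Split off the coefficient `c` of `t ^ d`; the inner sum is the inductive hypothesis at
    -- `x + c t ^ d`, where `E_d` takes the value `E_d(x) + c δ`.
    rw [← (Fin.snocEquiv fun _ => F).sum_comp, Fintype.sum_prod_type]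
    simp only [Fin.sum_univ_castSucc, Fin.snocEquiv_apply, Fin.snoc_castSucc, Fin.snoc_last,
      Fin.val_castSucc, Fin.val_last]
    have hE : ∀ c : F, carlitzE F t d (x + c • t ^ d) =
        δ * (carlitzE F t d x / δ + algebraMap F L c) := fun c => by
      rw [map_add, map_smul, Algebra.smul_def, ← hδ]; field_simp
    rw [carlitzE_succ, ← hδ] at hx
    set z := carlitzE F t d x / δ with hz
    have hEz : carlitzE F t d x = δ * z := by rw [hz]; field_simp
    have hs : carlitzE F t (d + 1) x = δ ^ Fintype.card F * (z ^ Fintype.card F - z) := by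
      rw [carlitzE_succ, ← hδ, hEz, mul_pow, ← mul_assoc, pow_sub_one_mul hq]; ring
    have hz0 : z ^ Fintype.card F - z ≠ 0 := by
      intro h
      rw [← carlitzE_succ (F := F), hs, h, mul_zero] at hx
      exact hx rfl
    have hzc : ∀ c : F, z + algebraMap F L c ≠ 0 := by
      intro c h
      apply hz0
      rw [eq_neg_of_add_eq_zero_left h, ← map_neg, ← map_pow, FiniteField.pow_card, sub_self]
    have hin : ∀ c : F, ∑ b : Fin d → F, (x + (∑ i : Fin d, b i • t ^ (i : ℕ) + c • t ^ d))⁻¹ =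
        (ellVal F t d)⁻¹ * (z + algebraMap F L c)⁻¹ := by
      intro c
      have hcomm : ∀ b : Fin d → F, x + (∑ i : Fin d, b i • t ^ (i : ℕ) + c • t ^ d) =
          x + c • t ^ d + ∑ i : Fin d, b i • t ^ (i : ℕ) := fun b => by ring
      simp only [hcomm]
      rw [ih (x + c • t ^ d) (by rw [hE]; exact mul_ne_zero hδ0 (hzc c)), hE c]
      have := hzc c
      have := ellVal_ne (F := F) ht d
      field_simp
    simp only [hin, ← mul_sum]
    rw [sum_inv_add z hz0, hs, (carlitzE_mul t 0 d).2, ← hδ]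
    have hl : ellVal F t (d + 1) = -ellVal F t d * (t ^ Fintype.card F ^ (d + 1) - t) := by
      rw [ellVal, prod_range_succ, ← ellVal]; ring
    rw [hl]
    have := ellVal_ne (F := F) ht d
    have := pow_sub_ne (F := F) ht d
    field_simp

theorem carlitzE_monicVal (t : L) (d : ℕ) (c : Fin d → F) :
    carlitzE F t d (monicVal t d c) = carlitzE F t d (t ^ d) := by
  simp [monicVal, carlitzE_pow]

theorem monicVal_ne {t : L} (ht : Function.Injective fun n : ℕ => t ^ n) (d : ℕ)
    (c : Fin d → F) : monicVal t d c ≠ 0 := by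
  intro h
  apply carlitzE_self_ne (F := F) ht d
  rw [← carlitzE_monicVal t d c, h, map_zero]

/-- The case `S_d(1) = 1 / ℓ_d`. -/
theorem sum_monicVal_inv {t : L} (ht : Function.Injective fun n : ℕ => t ^ n) (d : ℕ) :
    ∑ c : Fin d → F, (monicVal t d c)⁻¹ = (ellVal F t d)⁻¹ := by
  have h := carlitzE_self_ne (F := F) ht d
  have := ellVal_ne (F := F) ht d
  simp only [monicVal]
  rw [sum_inv_shift ht d _ h]
  field_simp

theorem sum_pow_card_pow {ι : Type} (s : Finset ι) (f : ι → L) (k : ℕ) :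
    ∑ i ∈ s, f i ^ Fintype.card F ^ k = (∑ i ∈ s, f i) ^ Fintype.card F ^ k := by
  simp only [← frob_pow_apply (F := F), map_sum]

/-- The two-variable identity behind the theorem. Both sides are polynomials of degree at most `d`
in `x` with the same coefficient of `x ^ d`, namely `S_d(1) ^ (q ^ j) = ℓ_d ^ (-q ^ j)`, and both
vanish at the `d` distinct points `t ^ q ^ (i + j)`, `i < d`. -/
theorem sum_monicVal_mul {t : L} (ht : Function.Injective fun n : ℕ => t ^ n) (j d : ℕ) (x : L) :
    ∑ c : Fin d → F, monicVal x d c * (monicVal t d c)⁻¹ ^ Fintype.card F ^ j =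
      (∏ i ∈ range d, (x - t ^ Fintype.card F ^ (i + j))) / ellVal F t d ^ Fintype.card F ^ j := by
  set q := Fintype.card F with hq
  have hq1 : 1 < q := Fintype.one_lt_card
  set w : (Fin d → F) → L := fun c => (monicVal t d c)⁻¹ ^ q ^ j with hw
  have hwsum : ∑ c, w c = (ellVal F t d ^ q ^ j)⁻¹ := by
    rw [hw, sum_pow_card_pow, sum_monicVal_inv ht, inv_pow]
  let P : L[X] := ∑ c : Fin d → F, C (w c) *
    (X ^ d + ∑ i : Fin d, C (algebraMap F L (c i)) * X ^ (i : ℕ))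
  let Q : L[X] := C (∑ c, w c) * ∏ i ∈ range d, (X - C (t ^ q ^ (i + j)))
  have hP : ∀ y, P.eval y = ∑ c : Fin d → F, monicVal y d c * w c := by
    intro y
    simp only [P, eval_finsetSum, eval_mul, eval_add, eval_pow, eval_X, eval_C, monicVal,
      Algebra.smul_def]
    exact sum_congr rfl fun c _ => mul_comm _ _
  have hQ : ∀ y, Q.eval y = (∏ i ∈ range d, (y - t ^ q ^ (i + j))) / ellVal F t d ^ q ^ j := by
    intro y
    simp only [Q, eval_mul, eval_C, eval_prod, eval_sub, eval_X, hwsum]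
    rw [mul_comm, div_eq_mul_inv]
  suffices h : P = Q by rw [← hP, ← hQ, h]
  refine eq_of_degree_sub_lt_of_eval_index_eq (range d) (v := fun i => t ^ q ^ (i + j)) ?_ ?_ ?_
  · intro a _ b _ h
    have := Nat.pow_right_injective hq1 (ht h)
    omega
  · -- The leading terms cancel in `P - Q`.
    rw [card_range]
    have hsplit : P - Q =
        ∑ c : Fin d → F, C (w c) * ∑ i : Fin d, C (algebraMap F L (c i)) * X ^ (i : ℕ)
        - C (∑ c, w c) * (∏ i ∈ range d, (X - C (t ^ q ^ (i + j))) - X ^ d) := by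
      simp only [P, Q, mul_add, sum_add_distrib, ← sum_mul, map_sum]
      ring
    rw [hsplit, ← mem_degreeLT]
    refine Submodule.sub_mem _ (Submodule.sum_mem _ fun c _ => ?_) ?_
    · rw [← smul_eq_C_mul]
      refine Submodule.smul_mem _ _ (Submodule.sum_mem _ fun i _ => ?_)
      rw [mem_degreeLT]
      exact (degree_C_mul_X_pow_le _ _).trans_lt (by exact_mod_cast i.2)
    · rw [← smul_eq_C_mul]
      refine Submodule.smul_mem _ _ ?_
      rw [mem_degreeLT]
      have hm : (∏ i ∈ range d, (X - C (t ^ q ^ (i + j)))).Monic :=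
        monic_prod_of_monic _ _ fun i _ => monic_X_sub_C _
      have hdg : (∏ i ∈ range d, (X - C (t ^ q ^ (i + j)))).degree = (d : WithBot ℕ) := by
        simp only [degree_prod, degree_X_sub_C, sum_const, card_range, nsmul_one]
      refine (degree_sub_lt_left (by rw [hdg, degree_X_pow]) hm.ne_zero ?_).trans_eq hdg
      rw [hm.leadingCoeff, (monic_X_pow d).leadingCoeff]
  · intro i hi
    rw [hP, hQ, prod_eq_zero hi (sub_self _), zero_div]
    -- At `x = t ^ q ^ (i + j)` the summand is `a ^ (q ^ (i + j) - q ^ j)`.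
    have : ∀ c : Fin d → F, monicVal (t ^ q ^ (i + j)) d c * w c
        = (monicVal t d c ^ (q ^ i - 1)) ^ q ^ j := by
      intro c
      have h0 := monicVal_ne ht d c
      have hpos : 1 ≤ q ^ i := Nat.one_le_pow _ _ (by omega)
      rw [hq, ← monicVal_pow, ← hq, pow_add, pow_mul, hw, ← mul_pow, pow_sub₀ _ h0 hpos, pow_one]
    simp only [this]
    rw [sum_pow_card_pow, sum_monicVal_pow t (mem_range.1 hi), zero_pow]
    positivity

end PowerSum

/-- S_d(q^j - 1) = ℓ_{d+j-1}/(ℓ_{j-1} ℓ_d^{q^j}). -/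
theorem Sd_qj_sub_one (F : Type) [Field F] [Fintype F] (q : ℕ) (hq : q = Fintype.card F)
    (j d : ℕ) (hj : 1 ≤ j) :
    S F d (q ^ j - 1) = ell F (d + j - 1) / (ell F (j - 1) * ell F d ^ q ^ j) := by
  subst hq
  have ht : Function.Injective fun n : ℕ => tL F ^ n := by
    intro m n h
    simp only [tL, HahnSeries.single_pow, one_pow] at h
    -- Compare the coefficients of `u ^ (-m)`.
    have h2 := congrArg (fun f => HahnSeries.coeff f (m • (-1 : ℤ))) h
    by_contra hmn
    have hne : m • (-1 : ℤ) ≠ n • (-1 : ℤ) := by simpa using hmn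
    simp only [HahnSeries.coeff_single_same, HahnSeries.coeff_single_of_ne hne] at h2
    exact one_ne_zero h2
  have hm : ∀ c : Fin d → F, mpoly F d c = monicVal (tL F) d c := by
    intro c
    simp [mpoly, monicVal, Algebra.smul_def]
  have hpos : 1 ≤ Fintype.card F ^ j := Nat.one_le_pow _ _ Fintype.card_pos
  have hS : S F d (Fintype.card F ^ j - 1) = ∑ c : Fin d → F,
      monicVal (tL F) d c * (monicVal (tL F) d c)⁻¹ ^ Fintype.card F ^ j := by
    refine sum_congr rfl fun c _ => ?_
    rw [hm, pow_sub₀ _ (inv_ne_zero (monicVal_ne ht d c)) hpos, pow_one, inv_inv, mul_comm]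
  have hell : ell F (d + j - 1) = ell F (j - 1) *
      ∏ i ∈ range d, (tL F - tL F ^ Fintype.card F ^ (i + j)) := by
    obtain ⟨k, rfl⟩ : ∃ k, j = k + 1 := ⟨j - 1, by omega⟩
    rw [show d + (k + 1) - 1 = k + d by omega, ell, prod_range_add, Nat.add_sub_cancel, ell]
    congr 1
    refine prod_congr rfl fun i _ => ?_
    rw [show k + i + 1 = i + (k + 1) by omega]
  have h0 : ell F (j - 1) ≠ 0 := ellVal_ne (F := F) ht (j - 1)
  rw [hS, sum_monicVal_mul ht, hell, mul_div_mul_left _ _ h0]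
  rfl
end

section
/- Let 1 ≤ s < q and 0 ≤ k_i < k for 1 ≤ i ≤ s. Then for every d ≥ 0, S_d(q^k - Σ_{i=1}^s q^{k_i}) = ℓ_d^{(s-1)q^k} · ∏_{i=1}^s S_d(q^k - q^{k_i}). -/
/-!
Write `p_c` for the monic polynomial of degree `d` over `F` with lower coefficients `c`, and put
`t_n = t ^ q ^ n`. Frobenius is an `F`-algebra endomorphism, so `p_c(t) ^ q ^ n = p_c(t_n)`, and
each power sum in the theorem has the shape `∑_c (∏ i, p_c(τ i)) / p_c(θ)` with `θ = t_k`,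
`τ i = t_{k_i}`. For arbitrary `τ i` in a field `K ⊇ F`, and `θ ∈ K` whose Frobenius conjugates
`θ_j = θ ^ q ^ j` are pairwise distinct, this sum equals `b₀ * ∏ i, ∏ j < d, (τ i - θ_j)` with
`b₀ = ∏ 1 ≤ j ≤ d, (θ - θ_j)⁻¹` (`sum_prod_aeval_div`); the factorization follows by comparing this
formula for the `s`-fold product with the one for each single factor.

The formula is Lagrange interpolation at the `q ^ d` nodes `a_c = p_c(θ)`.
* The values `p_c(τ)` are interpolated by `linInterp`, an `F`-linear polynomial plus the constant
  `∏ j < d, (τ - θ_j)`, of degree at most `q ^ (d - 1)`: this is the interpolation of `p_c` itself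
  at `θ_0, …, θ_{d-1}`. A product of fewer than `q` of them still has degree less than `q ^ d`.
* The nodes are the roots of `nodePoly`, the polynomial `∑ j ≤ d, b_j X ^ q ^ j - 1` with `b_j` the
  Lagrange weights of `θ_0, …, θ_d`, because `∑ j, b_j p_c(θ_j)` is the coefficient of `X ^ d` in
  `p_c`. In characteristic `p` its derivative is the constant `b₀`, so Lagrange's formula at `0`
  reads `∑_c f(a_c) / a_c = b₀ f(0)` for every polynomial `f` with `deg f < q ^ d`.
-/

open Polynomial Finset

set_option linter.unusedSectionVars false

/-! ### Monic polynomials of degree `d` -/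

/-- The monic polynomial of degree `d` over `F` with lower-order coefficients `c`. -/
noncomputable def monicPoly {F : Type} [Field F] {d : ℕ} (c : Fin d → F) : F[X] :=
  X ^ d + ∑ i : Fin d, C (c i) * X ^ (i : ℕ)

section MonicPoly

variable {F : Type} [Field F] {d : ℕ}

lemma degree_monicPoly_tail (c : Fin d → F) :
    (∑ i : Fin d, C (c i) * X ^ (i : ℕ) : F[X]).degree < d :=
  degree_sum_fin_lt c

lemma monicPoly_monic (c : Fin d → F) : (monicPoly c).Monic :=
  monic_X_pow_add (degree_monicPoly_tail c)

lemma degree_monicPoly (c : Fin d → F) : (monicPoly c).degree = d := by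
  rw [monicPoly, degree_add_eq_left_of_degree_lt] <;> rw [degree_X_pow]
  exact degree_monicPoly_tail c

lemma monicPoly_injective : Function.Injective (monicPoly : (Fin d → F) → F[X]) := by
  intro c c' h
  funext i
  have h := congrArg (fun p : F[X] => p.coeff i) (add_left_cancel h)
  simpa [finsetSum_coeff, coeff_X_pow, Fin.val_inj] using h

end MonicPoly

/-! ### Interpolation at the values of monic polynomials -/

section Interpolation

variable {F : Type} [Field F] [Fintype F] {K : Type} [Field K] [Algebra F K]

local notation "q" => Fintype.card F

lemma aeval_pow_card_pow (p : F[X]) (x : K) (n : ℕ) :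
    aeval (x ^ q ^ n) p = (aeval x p) ^ q ^ n := by
  induction n with
  | zero => simp
  | succ n ih =>
    have h := Polynomial.aeval_algHom_apply (FiniteField.frobeniusAlgHom F K) (x ^ q ^ n) p
    simp only [FiniteField.coe_frobeniusAlgHom] at h
    rw [pow_succ q n, pow_mul, pow_mul, h, ih]

lemma sub_pow_card_pow (x y : K) (n : ℕ) : (x - y) ^ q ^ n = x ^ q ^ n - y ^ q ^ n := by
  induction n with
  | zero => simp
  | succ n ih =>
    have h := map_sub (FiniteField.frobeniusAlgHom F K) (x ^ q ^ n) (y ^ q ^ n)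
    simp only [FiniteField.coe_frobeniusAlgHom] at h
    rw [pow_succ q n, pow_mul, pow_mul, pow_mul, ih, h]

/-- If the Frobenius conjugates of `θ` are pairwise distinct, then `θ` is transcendental: every
conjugate of a root of `p` is again a root of `p`. -/
lemma eq_zero_of_aeval_eq_zero {θ : K} (hθ : Function.Injective fun j : ℕ => θ ^ q ^ j)
    {p : F[X]} (hp : aeval θ p = 0) : p = 0 := by
  rw [← Polynomial.map_eq_zero (algebraMap F K)]
  refine eq_zero_of_infinite_isRoot _ ((Set.infinite_range_of_injective hθ).mono ?_)
  rintro _ ⟨j, rfl⟩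
  have hq : q ^ j ≠ 0 := pow_ne_zero _ Fintype.card_ne_zero
  simp only [Set.mem_ofPred_eq, IsRoot.def, eval_map_algebraMap]
  rw [aeval_pow_card_pow, hp, zero_pow hq]

/-- The Lagrange weight `∏ i ≤ d, i ≠ j, (θ_j - θ_i)⁻¹` of the node `θ_j = θ ^ q ^ j` among
`θ_0, …, θ_d`. -/
noncomputable def conjWeight (F : Type) [Fintype F] (θ : K) (d j : ℕ) : K :=
  Lagrange.nodalWeight (range (d + 1)) (fun j => θ ^ Fintype.card F ^ j) j

/-- The polynomial `∑ j ≤ d, b_j X ^ q ^ j - 1`. When the conjugates of `θ` are pairwise distinct,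
its roots are the values at `θ` of the monic polynomials of degree `d` over `F`. -/
noncomputable def nodePoly (F : Type) [Fintype F] (θ : K) (d : ℕ) : K[X] :=
  ∑ j ∈ range (d + 1), C (conjWeight F θ d j) * X ^ Fintype.card F ^ j - 1

/-- When the conjugates of `θ` are pairwise distinct, this polynomial sends `p(θ)` to `p(τ)` for
every monic `p` of degree `d` over `F`; its degree is at most `q ^ (d - 1)`. -/
noncomputable def linInterp (F : Type) [Fintype F] (θ : K) (d : ℕ) (τ : K) : K[X] :=
  ∑ j ∈ range d,
      C ((Lagrange.basis (range d) (fun j => θ ^ Fintype.card F ^ j) j).eval τ) *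
        X ^ Fintype.card F ^ j +
    C (∏ j ∈ range d, (τ - θ ^ Fintype.card F ^ j))

/-- Every `p_c(θ)` is a root: the sum `∑ j, b_j p_c(θ_j)` is the leading coefficient of `p_c`. -/
lemma eval_nodePoly {θ : K} (hθ : Function.Injective fun j : ℕ => θ ^ q ^ j) {d : ℕ}
    (c : Fin d → F) : (nodePoly F θ d).eval (aeval θ (monicPoly c)) = 0 := by
  have hdeg : ((monicPoly c).map (algebraMap F K)).degree = d := by
    rw [degree_map, degree_monicPoly]
  have h := Lagrange.coeff_eq_sum (s := range (d + 1)) (v := fun j => θ ^ q ^ j)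
    hθ.injOn (P := (monicPoly c).map (algebraMap F K))
    (by rw [hdeg, card_range]; exact_mod_cast d.lt_succ_self)
  have hlead : ((monicPoly c).map (algebraMap F K)).coeff d = 1 := by
    have := ((monicPoly_monic c).map (algebraMap F K)).coeff_natDegree
    rwa [natDegree_eq_of_degree_eq_some hdeg] at this
  rw [card_range, Nat.add_sub_cancel, hlead] at h
  simp only [nodePoly, eval_sub, eval_finsetSum, eval_mul, eval_C, eval_pow, eval_X, eval_one]
  rw [sub_eq_zero, h]
  refine sum_congr rfl fun j _ => ?_
  rw [conjWeight, Lagrange.nodalWeight, prod_inv_distrib, eval_map_algebraMap,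
    aeval_pow_card_pow, div_eq_mul_inv, mul_comm]

lemma derivative_nodePoly (θ : K) (d : ℕ) :
    derivative (nodePoly F θ d) = C (conjWeight F θ d 0) := by
  have hq : (q : K) = 0 := by
    rw [← map_natCast (algebraMap F K), FiniteField.cast_card_eq_zero, map_zero]
  rw [nodePoly, sum_range_succ']
  simp [derivative_X_pow, hq]

/-- The nodes `p_c(θ)` are exactly the roots of `nodePoly`, which has degree `q ^ d`. -/
lemma nodePoly_eq {θ : K} (hθ : Function.Injective fun j : ℕ => θ ^ q ^ j) (d : ℕ)
    (hinj : Function.Injective fun c : Fin d → F => aeval θ (monicPoly c)) :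
    nodePoly F θ d = C (conjWeight F θ d d) *
      Lagrange.nodal univ fun c : Fin d → F => aeval θ (monicPoly c) := by
  classical
  have hq : 1 < q := Fintype.one_lt_card
  have hcard : #(univ : Finset (Fin d → F)) = q ^ d := by simp
  refine eq_of_degree_sub_lt_of_eval_index_eq univ (v := fun c => aeval θ (monicPoly c))
    hinj.injOn ?_ fun c hc => ?_
  · rw [hcard]
    set N := Lagrange.nodal univ fun c : Fin d → F => aeval θ (monicPoly c) with hN
    have hNm : N.Monic := Lagrange.nodal_monic
    have hNd : N.degree = (q ^ d : ℕ) := by rw [hN, Lagrange.degree_nodal, hcard]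
    have hNX : (X ^ q ^ d - N : K[X]).degree < (q ^ d : ℕ) := by
      have := degree_sub_lt_left
        (show (X ^ q ^ d : K[X]).degree = N.degree by rw [hNd, degree_X_pow]) (pow_ne_zero _ X_ne_zero)
        (by rw [hNm.leadingCoeff, (monic_X_pow _).leadingCoeff])
      rwa [degree_X_pow] at this
    have hsplit : nodePoly F θ d - C (conjWeight F θ d d) * N =
        (∑ j ∈ range d, C (conjWeight F θ d j) * X ^ q ^ j - 1) +
          C (conjWeight F θ d d) * (X ^ q ^ d - N) := by
      rw [nodePoly, sum_range_succ]; ring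
    rw [hsplit, ← mem_degreeLT]
    rw [← mem_degreeLT] at hNX
    refine Submodule.add_mem _ (Submodule.sub_mem _ (Submodule.sum_mem _ fun j hj => ?_) ?_) ?_
    · rw [mem_degreeLT]
      refine (degree_C_mul_X_pow_le _ _).trans_lt ?_
      exact_mod_cast Nat.pow_lt_pow_right hq (mem_range.mp hj)
    · rw [mem_degreeLT, degree_one]
      exact_mod_cast Nat.pos_of_ne_zero (by positivity)
    · rw [← smul_eq_C_mul]
      exact Submodule.smul_mem _ _ hNX
  · have h := Lagrange.eval_nodal_at_node (v := fun c : Fin d → F => aeval θ (monicPoly c)) hc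
    rw [eval_nodePoly hθ, eval_mul, h, mul_zero]

lemma aeval_monicPoly_injective {θ : K} (hθ : Function.Injective fun j : ℕ => θ ^ q ^ j) (d : ℕ) :
    Function.Injective fun c : Fin d → F => aeval θ (monicPoly c) := by
  intro c c' h
  refine monicPoly_injective (sub_eq_zero.mp (eq_zero_of_aeval_eq_zero hθ ?_))
  rw [map_sub, sub_eq_zero]
  exact h

lemma aeval_monicPoly_ne_zero {θ : K} (hθ : Function.Injective fun j : ℕ => θ ^ q ^ j) {d : ℕ}
    (c : Fin d → F) : aeval θ (monicPoly c) ≠ 0 :=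
  fun h => (monicPoly_monic c).ne_zero (eq_zero_of_aeval_eq_zero hθ h)

lemma conjWeight_ne_zero {θ : K} (hθ : Function.Injective fun j : ℕ => θ ^ q ^ j) {d j : ℕ}
    (hj : j ≤ d) : conjWeight F θ d j ≠ 0 :=
  Lagrange.nodalWeight_ne_zero hθ.injOn (mem_range.mpr (Nat.lt_succ_of_le hj))

/-- Lagrange's interpolation formula at the nodes `p_c(θ)`, evaluated at `0`. All nodes have the
same Lagrange weight, since `nodePoly` has constant derivative. -/
lemma sum_eval_div {θ : K} (hθ : Function.Injective fun j : ℕ => θ ^ q ^ j) (d : ℕ)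
    {f : K[X]} (hf : f.degree < (q ^ d : ℕ)) :
    ∑ c : Fin d → F, f.eval (aeval θ (monicPoly c)) / aeval θ (monicPoly c) =
      conjWeight F θ d 0 * f.eval 0 := by
  classical
  have hq : 1 < q := Fintype.one_lt_card
  have hinj := aeval_monicPoly_injective (F := F) hθ d
  have hP := nodePoly_eq hθ d hinj
  have hb := conjWeight_ne_zero hθ le_rfl (d := d)
  have hb0 := conjWeight_ne_zero hθ (Nat.zero_le d)
  set v := fun c : Fin d → F => aeval θ (monicPoly c) with hv
  have hcard : #(univ : Finset (Fin d → F)) = q ^ d := by simp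
  have hw (c : Fin d → F) : Lagrange.nodalWeight univ v c =
      conjWeight F θ d d / conjWeight F θ d 0 := by
    have h := congrArg (fun p => eval (v c) (derivative p)) hP
    simp only [derivative_nodePoly, derivative_C_mul, eval_mul, eval_C] at h
    rw [Lagrange.nodalWeight_eq_eval_derivative_nodal (mem_univ c), h, div_mul_cancel_left₀ hb]
  have hnod : conjWeight F θ d d * (Lagrange.nodal univ v).eval 0 = -1 := by
    have h := congrArg (eval 0) hP
    rw [eval_mul, eval_C] at h
    rw [← h]
    simp [nodePoly, eval_finsetSum]
  have hL := Lagrange.eval_interpolate_not_at_node (s := univ) (v := v) (x := 0)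
    (fun c => f.eval (v c)) fun c _ => (aeval_monicPoly_ne_zero hθ c).symm
  rw [← Lagrange.eq_interpolate hinj.injOn (by rwa [hcard])] at hL
  have hterm : ∑ c, Lagrange.nodalWeight univ v c * (0 - v c)⁻¹ * f.eval (v c) =
      -(conjWeight F θ d d / conjWeight F θ d 0) * ∑ c, f.eval (v c) / v c := by
    rw [mul_sum]
    refine sum_congr rfl fun c _ => ?_
    rw [hw, zero_sub, inv_neg]
    ring
  rw [hL, hterm]
  calc ∑ c, f.eval (v c) / v c
      = -(conjWeight F θ d d * (Lagrange.nodal univ v).eval 0) * ∑ c, f.eval (v c) / v c := by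
        rw [hnod]; ring
    _ = _ := by field_simp

lemma eval_linInterp {θ : K} (hθ : Function.Injective fun j : ℕ => θ ^ q ^ j) {d : ℕ} (τ : K)
    (c : Fin d → F) :
    (linInterp F θ d τ).eval (aeval θ (monicPoly c)) = aeval τ (monicPoly c) := by
  -- Removing the nodal polynomial brings `p_c` below degree `d` without changing its values there.
  set v := fun j : ℕ => θ ^ q ^ j with hv
  set g := (monicPoly c).map (algebraMap F K) with hg
  have hdeg : g.degree = d := by rw [hg, degree_map, degree_monicPoly]
  have hlt : (g - Lagrange.nodal (range d) v).degree < #(range d) := by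
    rw [card_range, ← hdeg]
    refine degree_sub_lt_left (by rw [hdeg, Lagrange.degree_nodal, card_range])
      ((monicPoly_monic c).map _).ne_zero ?_
    rw [((monicPoly_monic c).map _).leadingCoeff, Lagrange.nodal_monic.leadingCoeff]
  have h := Lagrange.eq_interpolate_of_eval_eq (r := fun j => g.eval (v j)) hθ.injOn hlt
    fun j hj => by rw [eval_sub, Lagrange.eval_nodal_at_node hj, sub_zero]
  have h := congrArg (eval τ) (sub_eq_iff_eq_add.mp h)
  rw [hg, eval_map_algebraMap] at h
  rw [h, linInterp, eval_add, eval_add, Lagrange.eval_nodal, eval_C, Lagrange.interpolate_apply,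
    eval_finsetSum, eval_finsetSum]
  congr 1
  refine sum_congr rfl fun j _ => ?_
  simp only [eval_mul, eval_C, eval_pow, eval_X]
  rw [hv, eval_map_algebraMap, aeval_pow_card_pow, mul_comm]

lemma eval_zero_linInterp (θ : K) (d : ℕ) (τ : K) :
    (linInterp F θ d τ).eval 0 = ∏ j ∈ range d, (τ - θ ^ q ^ j) := by
  have h0 : ∀ j : ℕ, q ^ j ≠ 0 := fun j => pow_ne_zero _ Fintype.card_ne_zero
  simp only [linInterp, eval_add, eval_finsetSum, eval_mul, eval_pow, eval_X, eval_C,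
    zero_pow (h0 _), mul_zero, sum_const_zero, zero_add]

/-- The bound `natDegree ≤ q ^ (d - 1)`, in a form that also covers `d = 0`. -/
lemma natDegree_linInterp_mul_le (θ : K) (d : ℕ) (τ : K) :
    (linInterp F θ d τ).natDegree * q ≤ q ^ d := by
  have hq : 1 < q := Fintype.one_lt_card
  cases d with
  | zero => simp [linInterp]
  | succ d =>
    rw [pow_succ]
    refine Nat.mul_le_mul_right _ (natDegree_add_le_of_degree_le
      (natDegree_sum_le_of_forall_le _ _ fun j hj => ?_) (by rw [natDegree_C]; positivity))
    refine (natDegree_C_mul_X_pow_le _ _).trans (Nat.pow_le_pow_right hq.le ?_)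
    exact Nat.le_of_lt_succ (mem_range.mp hj)

/-- Closed formula for the twisted power sums; the factors `p_c(τ i)` contribute independently. -/
theorem sum_prod_aeval_div {θ : K} (hθ : Function.Injective fun j : ℕ => θ ^ q ^ j) (d : ℕ)
    {ι : Type} [Fintype ι] (hι : Fintype.card ι < q) (τ : ι → K) :
    ∑ c : Fin d → F, (∏ i, aeval (τ i) (monicPoly c)) / aeval θ (monicPoly c) =
      conjWeight F θ d 0 * ∏ i, ∏ j ∈ range d, (τ i - θ ^ q ^ j) := by
  have hq : 0 < q := Fintype.card_pos
  have hdeg : (∏ i, linInterp F θ d (τ i)).degree < (q ^ d : ℕ) := by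
    refine degree_le_natDegree.trans_lt ?_
    refine WithBot.coe_lt_coe.mpr ((natDegree_prod_le _ _).trans_lt ?_)
    refine Nat.lt_of_mul_lt_mul_right (a := q) ?_
    calc (∑ i, (linInterp F θ d (τ i)).natDegree) * q
        = ∑ i, (linInterp F θ d (τ i)).natDegree * q := sum_mul _ _ _
      _ ≤ ∑ _i : ι, q ^ d := sum_le_sum fun i _ => natDegree_linInterp_mul_le θ d (τ i)
      _ = Fintype.card ι * q ^ d := by simp
      _ < q ^ d * q := by
        rw [mul_comm]
        exact Nat.mul_lt_mul_of_pos_left hι (pow_pos hq d)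
  have h := sum_eval_div hθ d hdeg
  simpa only [eval_prod, eval_linInterp hθ, eval_zero_linInterp] using h

end Interpolation

/-! ### Power sums in `F((1/t))` -/

section PowerSums

/-- The exponent `q ^ k - ∑ i, q ^ k_i` involves no truncated subtraction. -/
lemma sum_pow_le {q k s : ℕ} (hs : s < q) (ki : Fin s → ℕ) (hki : ∀ i, ki i < k) :
    ∑ i, q ^ ki i ≤ q ^ k := by
  have hq : 0 < q := by omega
  cases k with
  | zero =>
    have : IsEmpty (Fin s) := ⟨fun i => absurd (hki i) (Nat.not_lt_zero _)⟩
    simp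
  | succ k =>
    calc ∑ i, q ^ ki i ≤ ∑ _i : Fin s, q ^ k :=
          sum_le_sum fun i _ => Nat.pow_le_pow_right hq (Nat.le_of_lt_succ (hki i))
      _ = s * q ^ k := by simp
      _ ≤ q ^ (k + 1) := by rw [pow_succ, mul_comm]; exact Nat.mul_le_mul_left _ hs.le

variable (F : Type) [Field F] [Fintype F]

local notation "q" => Fintype.card F

lemma tL_pow (n : ℕ) : tL F ^ n = HahnSeries.single (-(n : ℤ)) 1 := by
  simp [tL, HahnSeries.single_pow]

lemma tL_pow_injective : Function.Injective fun n : ℕ => tL F ^ n := by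
  intro m n h
  have h : HahnSeries.single (-(m : ℤ)) (1 : F) = HahnSeries.single (-(n : ℤ)) 1 := by
    simpa only [tL_pow] using h
  have h := congrArg HahnSeries.order h
  rw [HahnSeries.order_single one_ne_zero, HahnSeries.order_single one_ne_zero] at h
  exact_mod_cast neg_injective h

lemma tL_conj_injective (k : ℕ) : Function.Injective fun j : ℕ => (tL F ^ q ^ k) ^ q ^ j := by
  intro i j h
  simp only [← pow_mul, ← pow_add] at h
  have := Nat.pow_right_injective (Fintype.one_lt_card (α := F)) (tL_pow_injective F h)
  omega

/-- For `θ = t ^ q ^ k` the constant `b₀` is `ℓ_d ^ (-q ^ k)`. -/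
lemma ell_pow_mul_conjWeight (d k : ℕ) :
    ell F d ^ q ^ k * conjWeight F (tL F ^ q ^ k) d 0 = 1 := by
  have he : (range (d + 1)).erase 0 = (range d).map ⟨Nat.succ, Nat.succ_injective⟩ := by
    ext (_ | j) <;> simp
  rw [conjWeight, Lagrange.nodalWeight, he, prod_map, ell, ← prod_pow, ← prod_mul_distrib]
  refine prod_eq_one fun j _ => ?_
  have hne : (tL F ^ q ^ k) ^ q ^ 0 - (tL F ^ q ^ k) ^ q ^ (j + 1) ≠ 0 :=
    sub_ne_zero.mpr ((tL_conj_injective F k).ne (Nat.succ_ne_zero j).symm)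
  have hrw : (tL F - tL F ^ q ^ (j + 1)) ^ q ^ k =
      (tL F ^ q ^ k) ^ q ^ 0 - (tL F ^ q ^ k) ^ q ^ (j + 1) := by
    rw [sub_pow_card_pow, pow_zero, pow_one, pow_right_comm]
  rw [hrw]
  exact mul_inv_cancel₀ hne

/-- The closed formula of `sum_prod_aeval_div` for `θ = t ^ q ^ k` and `τ i = t ^ q ^ k_i`. -/
lemma S_eq (d k : ℕ) {s : ℕ} (hs : s < q) (ki : Fin s → ℕ) (hki : ∀ i, ki i < k) :
    S F d (q ^ k - ∑ i, q ^ ki i) = conjWeight F (tL F ^ q ^ k) d 0 *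
      ∏ i, ∏ j ∈ range d, (tL F ^ q ^ ki i - (tL F ^ q ^ k) ^ q ^ j) := by
  rw [← sum_prod_aeval_div (tL_conj_injective F k) d (by rwa [Fintype.card_fin]), S]
  refine sum_congr rfl fun c _ => ?_
  have hm : mpoly F d c = aeval (tL F) (monicPoly c) := rfl
  have hne : mpoly F d c ≠ 0 := by
    have := aeval_monicPoly_ne_zero (tL_conj_injective F 0) c
    rwa [pow_zero, pow_one] at this
  simp only [aeval_pow_card_pow, ← hm]
  rw [prod_pow_eq_pow_sum, inv_pow, pow_sub₀ _ hne (sum_pow_le hs ki hki), mul_inv, inv_inv,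
    div_eq_mul_inv, mul_comm]

end PowerSums

/-- Factorization of S_d(q^k - Σ q^{k_i}) for 1 ≤ s < q, k_i < k. -/
theorem Sd_factorization (F : Type) [Field F] [Fintype F] (q : ℕ) (hq : q = Fintype.card F)
    (s k d : ℕ) (hs1 : 1 ≤ s) (hs2 : s < q) (ki : Fin s → ℕ) (hki : ∀ i, ki i < k) :
    S F d (q ^ k - ∑ i, q ^ ki i) =
      ell F d ^ ((s - 1) * q ^ k) * ∏ i, S F d (q ^ k - q ^ ki i) := by
  subst hq
  -- Each single factor is the case of a one-element index set.
  have h1 (i : Fin s) := S_eq F d k (Fintype.one_lt_card (α := F)) (fun _ : Fin 1 => ki i)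
    fun _ => hki i
  simp only [Fin.sum_univ_one, Fin.prod_univ_one] at h1
  rw [S_eq F d k hs2 ki hki, prod_congr rfl fun i _ => h1 i, prod_mul_distrib, prod_const,
    card_univ, Fintype.card_fin]
  obtain ⟨n, rfl⟩ : ∃ n, s = n + 1 := ⟨s - 1, by omega⟩
  rw [Nat.add_sub_cancel, mul_comm n, pow_mul, pow_succ, ← mul_assoc, ← mul_assoc, ← mul_pow,
    ell_pow_mul_conjWeight, one_pow, one_mul]
end

section
/- Let 1 ≤ s ≤ q and 0 ≤ k_i ≤ k for 1 ≤ i ≤ s. Then for every d ≥ 1, S_{<d}(Σ_{i=1}^s (q^k - q^{k_i})) = ∏_{i=1}^s S_{<d}(q^k - q^{k_i}). -/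
/-!
Let `q = #F`. For `n` divisible by `q - 1`, collecting polynomials up to scalars shows that
`S_{<d}(n)` is, up to sign, the sum of `a⁻ⁿ` over all nonzero `a ∈ F[t]` of degree `< d`. These `a`,
with `0`, are the roots of `P = ∏ (X - a)`, which is a linearized polynomial (only exponents `q^i`
occur), so `P'` is constant and the logarithmic derivative of `P` gives the generating series
`∑ S_{<d}(n) Xⁿ = X / f`, the sum being over all `n` divisible by `q - 1`,
where `f = P / P'(0) = X + c₀ X^q + c₁ X^(q^2) + ...`
(`exists_linPoly_mul_genG`, `coeff_genG`). It remains to see that the coefficient of `G = X / f` at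
`∑ (q^k - q^{k_i})` is the product of those at `q^k - q^{k_i}` (`coeff_factorization`).

That coefficient is the one of `X^(s q^k)` in `G ∏ X^(q^{k_i})`. Inverting `f` under composition,
expand each `X^(q^{k_i})` as a combination `∑ₘ β_{i,m} f^(q^m)`; the product becomes a combination of
powers `f^M` with `M = ∑ q^{m_i}`. In `f^M G = X f^(M-1)` the monomial `X^(s q^k)` has coefficient `1`
if `M = s q^k` and `0` otherwise (`coeff_linPoly_pow`; in terms of base `q` digits, a power `f^(M-1)`
only involves exponents whose digit sum is at most that of `M - 1`, and `s q^k - 1` has a larger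
digit sum than all smaller numbers). Finally, `∑ q^{m_i} = s q^k` with `s ≤ q` summands forces all
`m_i = k` (`pow_sum_unique`). Hence the coefficient is `∏ β_{i,k}`, and the case `s = 1` identifies
each factor.
-/


open Polynomial Finset

/-! ### Coefficients of powers of linearized polynomials -/

theorem coeff_X_pow_mul_expand {K : Type*} [CommRing K] (q : ℕ) (i n : ℕ) (hi : i < q)
    (A : K[X]) :
    (X ^ i * expand K q A).coeff (q * n + (q - 1)) = if i = q - 1 then A.coeff n else 0 := by
  rw [coeff_X_pow_mul', if_pos (by nlinarith [Nat.zero_le (q * n), Nat.le_sub_one_of_lt hi]),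
    coeff_expand (by omega)]
  split_ifs with h1 h2 h2
  · subst h2; simp [Nat.mul_div_cancel_left n (show 0 < q by omega)]
  · exfalso
    obtain ⟨c, hc⟩ := h1
    have h3 : q * n + (q - 1 - i) = q * c := by omega
    have : q ∣ (q - 1 - i) := (Nat.dvd_add_right (Dvd.intro n rfl)).1 ⟨c, h3⟩
    have := Nat.le_of_dvd (by omega) this
    omega
  · subst h2; simp at h1
  · rfl

/-- Exponents congruent to `q - 1` modulo `q` occur in `A(X^q) (X + B(X^q))^r` with `r < q` only
through the term `X^r` of the binomial expansion, and only if `r = q - 1`. -/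
theorem coeff_linPoly_pow_aux {K : Type*} [CommRing K] (q : ℕ) (hq : 0 < q) (A B : K[X])
    (r n : ℕ) (hr : r < q) :
    (expand K q A * (X + expand K q B) ^ r).coeff (q * n + (q - 1)) =
      if r = q - 1 then A.coeff n else 0 := by
  rw [add_pow, Finset.mul_sum, finsetSum_coeff]
  have : ∀ i ∈ range (r + 1), (expand K q A * (X ^ i * expand K q B ^ (r - i) * (r.choose i : K[X]))).coeff
      (q * n + (q - 1)) = if i = q - 1 then (A * B ^ (r - i) * (r.choose i : K[X])).coeff n else 0 := by
    intro i hi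
    rw [← coeff_X_pow_mul_expand q i n (by simp at hi; omega)]
    congr 1
    simp only [map_mul, map_pow, map_natCast]
    ring
  rw [Finset.sum_congr rfl this, Finset.sum_ite_eq']
  split_ifs with h1 h2 h2
  · subst h2; simp
  · simp at h1; omega
  · simp at h1; omega
  · rfl

/-- The linearized polynomial `X + c₀ X^q + c₁ X^(q^2) + ... + c_{r-1} X^(q^r)`, with linear
coefficient normalized to `1`. -/
noncomputable def linPoly {K : Type*} [CommRing K] (q r : ℕ) (c : ℕ → K) : K[X] :=
  X + ∑ i ∈ range r, C (c i) * X ^ q ^ (i + 1)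

theorem linPoly_eq {K : Type*} [CommRing K] (q r : ℕ) (c : ℕ → K) :
    linPoly q r c = X + expand K q (∑ i ∈ range r, C (c i) * X ^ q ^ i) := by
  simp [linPoly, map_sum, pow_succ', ← pow_mul]

section
variable {K : Type*} [CommRing K] (p e : ℕ) [Fact p.Prime] [CharP K p]

theorem linPoly_pow_pow (r j : ℕ) (c : ℕ → K) :
    linPoly (p ^ e) r c ^ (p ^ e) ^ j = X ^ (p ^ e) ^ j +
      ∑ i ∈ range r, C (c i ^ (p ^ e) ^ j) * X ^ (p ^ e) ^ (j + i + 1) := by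
  rw [linPoly, ← pow_mul p e j, add_pow_char_pow, sum_pow_char_pow]
  congr 1
  refine Finset.sum_congr rfl fun i _ => ?_
  rw [mul_pow, ← C_pow, ← pow_mul X]
  congr 2
  ring

theorem linPoly_pow (r : ℕ) (c : ℕ → K) :
    linPoly (p ^ e) r c ^ (p ^ e) =
      expand K (p ^ e) (linPoly (p ^ e) r (fun i => c i ^ (p ^ e))) := by
  have := linPoly_pow_pow p e r 1 c
  rw [pow_one] at this
  rw [this, linPoly]
  simp only [map_add, expand_X, map_sum, map_mul, expand_C, map_pow, ← pow_mul]
  congr 1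
  refine Finset.sum_congr rfl fun i _ => ?_
  congr 2
  ring

/-- The only power of a linearized `f` in which `X^(s q^k - 1)` occurs is the one with exponent
`s q^k - 1`. Writing `m = q a + r` and `f^q = g(X^q)` with `g` linearized reduces the claim for `k + 1`
and `f^m` to the one for `k` and `g^a`. -/
theorem coeff_linPoly_pow (he : e ≠ 0) (r s k : ℕ) (hs1 : 1 ≤ s) (hs2 : s ≤ p ^ e) (c : ℕ → K)
    (m : ℕ) : (linPoly (p ^ e) r c ^ m).coeff (s * (p ^ e) ^ k - 1) =
      if m = s * (p ^ e) ^ k - 1 then 1 else 0 := by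
  have hq : 1 < p ^ e := Nat.one_lt_pow he (Fact.out : p.Prime).one_lt
  induction k generalizing c m with
  | zero =>
    -- Here the exponent is `s - 1 < q`, and `f` is congruent to `X` modulo `X^q`.
    have h1 : (X : K[X]) ^ (p ^ e) ∣ linPoly (p ^ e) r c ^ m - X ^ m := by
      refine dvd_trans ?_ (sub_dvd_pow_sub_pow _ _ m)
      rw [linPoly, add_sub_cancel_left]
      refine Finset.dvd_sum fun i _ => Dvd.dvd.mul_left (pow_dvd_pow _ ?_) _
      exact Nat.le_self_pow (by omega) _
    have h2 := X_pow_dvd_iff.1 h1 (s * (p ^ e) ^ 0 - 1) (by simp; omega)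
    rw [coeff_sub, sub_eq_zero] at h2
    rw [h2, coeff_X_pow]
    simp [eq_comm]
  | succ k ih =>
    set q := p ^ e with hqd
    have hpos : 1 ≤ s * q ^ k := Nat.mul_pos hs1 (by positivity)
    have hN : s * q ^ (k + 1) - 1 = q * (s * q ^ k - 1) + (q - 1) := by
      have : s * q ^ (k+1) = q * (s * q ^ k) := by ring
      rw [this]
      obtain ⟨u, hu⟩ : ∃ u, s * q ^ k = u + 1 := ⟨_, (Nat.sub_add_cancel hpos).symm⟩
      rw [hu, Nat.mul_add]; simp; omega
    have hm : linPoly q r c ^ m = expand K q (linPoly q r (fun i => c i ^ q) ^ (m / q)) *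
        (X + expand K q (∑ i ∈ range r, C (c i) * X ^ q ^ i)) ^ (m % q) := by
      rw [← linPoly_eq, map_pow, hqd, ← linPoly_pow, ← pow_mul, ← pow_add, Nat.div_add_mod]
    rw [hm, hN, coeff_linPoly_pow_aux q (by omega) _ _ _ _ (Nat.mod_lt _ (by omega)), ih]
    have hdm := Nat.div_add_mod m q
    have hlt := Nat.mod_lt m (show q > 0 by omega)
    by_cases h : m = q * (s * q ^ k - 1) + (q - 1)
    · have h1 : m % q = q - 1 := by
        rw [h, Nat.mul_add_mod, Nat.mod_eq_of_lt (by omega)]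
      have h2 : m / q = s * q ^ k - 1 := by
        have : q * (m / q) = q * (s * q ^ k - 1) := by omega
        exact Nat.eq_of_mul_eq_mul_left (by omega) this
      rw [if_pos h1, if_pos h2, if_pos h]
    · rw [if_neg h]
      split_ifs with h1 h2
      · rw [h1, h2] at hdm; exact absurd hdm.symm h
      · rfl
      · rfl

/-- A truncation of `X = ∑ bₘ f^(q^m)`, the compositional inverse of `f`, raised to the `q^j`-th
power. -/
theorem exists_linPoly_expansion (r M j : ℕ) (c : ℕ → K) :
    ∃ β : ℕ → K, X ^ (p ^ e) ^ M ∣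
      X ^ (p ^ e) ^ j - ∑ m ∈ range M, C (β m) * linPoly (p ^ e) r c ^ (p ^ e) ^ m := by
  by_cases hj : M ≤ j
  · exact ⟨0, by simpa using pow_dvd_pow _ (Nat.pow_le_pow_right (pow_pos (Fact.out : p.Prime).pos _) hj)⟩
  · have ih : ∀ i, ∃ β : ℕ → K, X ^ (p ^ e) ^ M ∣ X ^ (p ^ e) ^ (j + i + 1) -
        ∑ m ∈ range M, C (β m) * linPoly (p ^ e) r c ^ (p ^ e) ^ m :=
      fun i => exists_linPoly_expansion r M (j + i + 1) c
    choose β hβ using ih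
    refine ⟨fun m => (if m = j then 1 else 0) - ∑ i ∈ range r, c i ^ (p ^ e) ^ j * β i m, ?_⟩
    have h := Finset.dvd_sum (s := range r) fun i _ => (hβ i).mul_left (C (c i ^ (p ^ e) ^ j))
    rw [← dvd_neg] at h
    convert h using 1
    have h1 : (X : K[X]) ^ (p ^ e) ^ j = linPoly (p ^ e) r c ^ (p ^ e) ^ j -
      ∑ i ∈ range r, C (c i ^ (p ^ e) ^ j) * X ^ (p ^ e) ^ (j + i + 1) := by
        rw [linPoly_pow_pow]; ring
    have h2 : linPoly (p ^ e) r c ^ (p ^ e) ^ j = ∑ m ∈ range M,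
        C (if m = j then 1 else 0) * linPoly (p ^ e) r c ^ (p ^ e) ^ m := by
      rw [Finset.sum_eq_single j]
      · simp
      · intro b _ hb; simp [hb]
      · intro h; simp at h; omega
    conv_lhs => rw [h1]
    rw [h2]
    simp only [mul_sub, Finset.sum_sub_distrib, C_sub, sub_mul, map_sum, Finset.sum_mul,
      Finset.mul_sum, map_mul]
    rw [Finset.sum_comm (s := range M)]
    simp only [mul_assoc]
    ring
termination_by M - j

/-- A number `s q^k` with `s ≤ q` is a sum of `s` powers of `q` in only one way. -/
theorem pow_sum_unique {q s k : ℕ} (hq : 1 < q) (hs2 : s ≤ q) (m : Fin s → ℕ)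
    (h : ∑ i, q ^ m i = s * q ^ k) (i : Fin s) : m i = k := by
  have hle : ∀ i, m i ≤ k := by
    intro i
    by_contra! hi
    have h1 : q ^ (k + 1) ≤ q ^ m i := Nat.pow_le_pow_right (by omega) hi
    have h2 : s * q ^ k ≤ q ^ (k + 1) := by rw [pow_succ']; gcongr
    have h3 := Finset.add_sum_erase univ (fun i => q ^ m i) (mem_univ i)
    have h4 : (univ.erase i).card • 1 ≤ ∑ j ∈ univ.erase i, q ^ m j :=
      Finset.card_nsmul_le_sum _ _ _ fun j _ => Nat.one_le_pow _ _ (by omega)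
    simp only [Finset.card_erase_of_mem (mem_univ i), card_univ, Fintype.card_fin, smul_eq_mul] at h4
    have h5 : s = 1 := by have := i.2; omega
    have h6 : q ^ k < q ^ (k + 1) := Nat.pow_lt_pow_right hq (by omega)
    subst h5
    omega
  have h1 : ∑ i, q ^ m i = ∑ _i : Fin s, q ^ k := by simpa using h
  have h2 := (Finset.sum_eq_sum_iff_of_le fun i _ => Nat.pow_le_pow_right (by omega) (hle i)).1 h1 i
    (mem_univ i)
  exact Nat.pow_right_injective hq h2

/-- Since `f^m G = X f^(m-1)`, this is `coeff_linPoly_pow` in terms of `G = X / f`. -/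
theorem coeff_linPoly_pow_mul (he : e ≠ 0) (r s k : ℕ) (hs1 : 1 ≤ s) (hs2 : s ≤ p ^ e) (c : ℕ → K)
    (G : PowerSeries K) (hG : (linPoly (p ^ e) r c : PowerSeries K) * G = PowerSeries.X)
    (m : ℕ) (hm : m ≠ 0) :
    PowerSeries.coeff (s * (p ^ e) ^ k) ((linPoly (p ^ e) r c : PowerSeries K) ^ m * G) =
      if m = s * (p ^ e) ^ k then 1 else 0 := by
  have hpos : 1 ≤ s * (p ^ e) ^ k := Nat.mul_pos hs1 (by have := (Fact.out : p.Prime).pos; positivity)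
  obtain ⟨m, rfl⟩ := Nat.exists_eq_succ_of_ne_zero hm
  rw [pow_succ, mul_assoc, hG, ← Nat.sub_add_cancel hpos, PowerSeries.coeff_succ_mul_X,
    ← Polynomial.coe_pow, Polynomial.coeff_coe, coeff_linPoly_pow p e he r s k hs1 hs2]
  simp

/-- For `G = X / f` with `f` linearized, the coefficient of `G` at `∑ (q^k - q^{k_i})` is
multiplicative in the family `k_i`. -/
theorem coeff_factorization (he : e ≠ 0) (r s k : ℕ) (hs1 : 1 ≤ s) (hs2 : s ≤ p ^ e) (c : ℕ → K)
    (G : PowerSeries K) (hG : (linPoly (p ^ e) r c : PowerSeries K) * G = PowerSeries.X)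
    (ki : Fin s → ℕ) (hki : ∀ i, ki i ≤ k) :
    PowerSeries.coeff (∑ i, ((p ^ e) ^ k - (p ^ e) ^ ki i)) G =
      ∏ i, PowerSeries.coeff ((p ^ e) ^ k - (p ^ e) ^ ki i) G := by
  have hq : 1 < p ^ e := Nat.one_lt_pow he (Fact.out : p.Prime).one_lt
  -- Truncating at `k + 2` leaves an error divisible by `X^(q^(k+2))`, and `s q^k ≤ q^(k+1)`.
  choose β hβ using fun j => exists_linPoly_expansion p e r (k + 2) j c
  have key : ∀ (s : ℕ) (_ : 1 ≤ s) (_ : s ≤ p ^ e) (ki : Fin s → ℕ) (_ : ∀ i, ki i ≤ k),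
      PowerSeries.coeff (∑ i, ((p ^ e) ^ k - (p ^ e) ^ ki i)) G = ∏ i, β (ki i) k := by
    clear! s
    intro s hs1 hs2 ki hki
    have hC := fun m hm => coeff_linPoly_pow_mul p e he r s k hs1 hs2 c G hG m hm
    set f := linPoly (p ^ e) r c with hf
    clear_value f
    generalize p ^ e = q at *
    have hn : ∑ i, (q ^ k - q ^ ki i) + ∑ i, q ^ ki i = s * q ^ k := by
      rw [← Finset.sum_add_distrib, Finset.sum_congr rfl fun i _ =>
        Nat.sub_add_cancel (Nat.pow_le_pow_right (by omega) (hki i))]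
      simp
    have hlt : s * q ^ k < q ^ (k + 2) := by
      calc s * q ^ k ≤ q * q ^ k := by gcongr
        _ = q ^ (k + 1) := by ring
        _ < q ^ (k + 2) := Nat.pow_lt_pow_right hq (by omega)
    have hdvd : (X : K[X]) ^ q ^ (k + 2) ∣ X ^ (∑ i, q ^ ki i) -
        ∏ i, ∑ m ∈ range (k + 2), C (β (ki i) m) * f ^ q ^ m := by
      rw [← Ideal.mem_span_singleton, ← Ideal.Quotient.eq, ← Finset.prod_pow_eq_pow_sum,
        map_prod, map_prod]
      refine Finset.prod_congr rfl fun i _ => ?_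
      rw [Ideal.Quotient.eq, Ideal.mem_span_singleton]
      exact hβ _
    have h1 : PowerSeries.coeff (s * q ^ k) ((PowerSeries.X ^ (∑ i, q ^ ki i)) * G) =
        PowerSeries.coeff (s * q ^ k)
          (((∏ i, ∑ m ∈ range (k + 2), C (β (ki i) m) * f ^ q ^ m : K[X]) : PowerSeries K) * G) := by
      obtain ⟨D, hD⟩ := hdvd
      rw [sub_eq_iff_eq_add] at hD
      rw [← Polynomial.coe_X, ← Polynomial.coe_pow, hD, Polynomial.coe_add, add_mul, map_add,
        Polynomial.coe_mul, Polynomial.coe_pow, Polynomial.coe_X, mul_assoc,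
        PowerSeries.coeff_X_pow_mul', if_neg (by omega), zero_add]
    rw [← hn, PowerSeries.coeff_X_pow_mul, hn] at h1
    rw [h1, Finset.prod_univ_sum]
    have h2 : ∀ μ : Fin s → ℕ, PowerSeries.coeff (s * q ^ k)
        (((∏ i, C (β (ki i) (μ i)) * f ^ q ^ μ i : K[X]) : PowerSeries K) * G) =
        if μ = fun _ => k then ∏ i, β (ki i) k else 0 := by
      intro μ
      rw [Finset.prod_mul_distrib, Finset.prod_pow_eq_pow_sum, ← map_prod, Polynomial.coe_mul,
        Polynomial.coe_C, mul_assoc, PowerSeries.coeff_C_mul, Polynomial.coe_pow, hC]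
      · by_cases h : μ = fun _ => k
        · simp [h]
        · rw [if_neg h, if_neg, mul_zero]
          exact fun h3 => h (funext (pow_sum_unique hq hs2 μ h3))
      · have : 0 < q ^ μ ⟨0, hs1⟩ := by positivity
        have := Finset.single_le_sum (f := fun i => q ^ μ i) (fun i _ => Nat.zero_le _)
          (mem_univ (⟨0, hs1⟩ : Fin s))
        omega
    rw [← Polynomial.coeToPowerSeries.ringHom_apply, map_sum, Finset.sum_mul, map_sum]
    simp only [Polynomial.coeToPowerSeries.ringHom_apply, h2]
    rw [Finset.sum_ite_eq', if_pos]
    simp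
  rw [key s hs1 hs2 ki hki]
  refine Finset.prod_congr rfl fun i _ => ?_
  have := key 1 le_rfl hq.le (fun _ => ki i) (fun _ => hki i)
  simpa using this.symm
end

/-! ### Polynomials of bounded degree as roots of a linearized polynomial -/

section
variable {F L : Type*} [Field F] [Field L] [Algebra F L]

/-- The value at `t` of the polynomial of degree `< d` with coefficients `v`. As `v` varies over
`Fin d → F` these values form the `F`-span of `1, t, ..., t^(d-1)`. -/
def evT (t : L) (d : ℕ) (v : Fin d → F) : L := ∑ i, algebraMap F L (v i) * t ^ (i : ℕ)

theorem evT_succ (t : L) (d : ℕ) (c : F) (v : Fin d → F) :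
    evT t (d + 1) (Fin.snoc v c) = evT t d v + algebraMap F L c * t ^ d := by
  simp [evT, Fin.sum_univ_castSucc]

theorem evT_smul (t : L) (d : ℕ) (c : F) (v : Fin d → F) :
    evT t d (c • v) = algebraMap F L c * evT t d v := by
  simp [evT, Finset.mul_sum, mul_assoc]

theorem evT_zero (t : L) (d : ℕ) : evT t d (0 : Fin d → F) = 0 := by
  simp [evT]

theorem prod_fin_succ {F M : Type*} [Fintype F] [CommMonoid M] (d : ℕ) (g : (Fin (d + 1) → F) → M) :
    ∏ v, g v = ∏ c : F, ∏ v : Fin d → F, g (Fin.snoc v c) := by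
  rw [← (Fin.snocEquiv (fun _ => F)).prod_comp, Fintype.prod_prod_type]
  rfl

theorem sum_fin_succ {F M : Type*} [Fintype F] [AddCommMonoid M] (d : ℕ) (g : (Fin (d + 1) → F) → M) :
    ∑ v, g v = ∑ c : F, ∑ v : Fin d → F, g (Fin.snoc v c) := by
  rw [← (Fin.snocEquiv (fun _ => F)).sum_comp, Fintype.sum_prod_type]
  rfl

variable [Fintype F]

/-- The polynomial `∏ (X - a)` over all `a` in the `F`-span of `1, t, ..., t^(d-1)`. -/
noncomputable def spanPoly (F : Type*) {L : Type*} [Field F] [Fintype F] [Field L] [Algebra F L]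
    (t : L) (d : ℕ) : L[X] := ∏ v : Fin d → F, (X - C (evT t d v))

/-- The homogenized form of `∏ (X - c) = X^q - X`, the product being over `c ∈ F`. -/
theorem prod_sub_smul (P w : L[X]) :
    ∏ c : F, (P - C (algebraMap F L c) * w) =
      P ^ Fintype.card F - w ^ (Fintype.card F - 1) * P := by
  classical
  have h0 : ∏ c : F, (X - C c) = X ^ Fintype.card F - X := by
    have hm : (X ^ Fintype.card F - X : F[X]).Monic := by
      refine monic_X_pow_sub ?_
      rw [degree_X]
      exact_mod_cast Fintype.one_lt_card
    have := prod_multiset_X_sub_C_of_monic_of_roots_card_eq hm (by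
      rw [FiniteField.roots_X_pow_card_sub_X, FiniteField.X_pow_card_sub_X_natDegree_eq _ Fintype.one_lt_card]
      rfl)
    rw [FiniteField.roots_X_pow_card_sub_X] at this
    exact this
  have hq : 1 < Fintype.card F := Fintype.one_lt_card
  have : IsDomain L[X] := inferInstance
  by_cases hw : w = 0
  · subst hw
    simp [show Fintype.card F - 1 ≠ 0 by omega]
  · apply IsFractionRing.injective L[X] (RatFunc L)
    set φ := algebraMap L[X] (RatFunc L) with hφ
    have hw' : φ w ≠ 0 := by
      simpa [hφ] using hw
    have h1 := congrArg (aeval (R := F) (φ P / φ w)) h0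
    simp only [map_prod, map_sub, map_pow, aeval_X, aeval_C] at h1
    have h2 : ∀ c : F, φ (P - C (algebraMap F L c) * w) = φ w * (φ P / φ w - algebraMap F (RatFunc L) c) := by
      intro c
      have : φ (C (algebraMap F L c)) = algebraMap F (RatFunc L) c := by
        rw [hφ, IsScalarTower.algebraMap_apply F L[X] (RatFunc L)]
        rfl
      rw [map_sub, map_mul, this]
      field_simp
    rw [map_prod, Finset.prod_congr rfl fun c _ => h2 c, Finset.prod_mul_distrib, h1]
    simp only [prod_const, card_univ, map_sub, map_mul, map_pow]
    obtain ⟨n, hn⟩ : ∃ n, Fintype.card F = n + 1 := ⟨_, (Nat.sub_add_cancel hq.le).symm⟩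
    rw [hn]
    simp only [Nat.add_sub_cancel]
    rw [mul_sub, div_pow, mul_div_cancel₀ _ (pow_ne_zero _ hw')]
    field_simp
    ring

variable (p e : ℕ) [Fact p.Prime] [CharP L p]

/-- `spanPoly F t d` is a linearized polynomial. The induction on `d` uses that the previous
polynomial `P` is `F`-linear as a function, so that translating its argument by `c t^d` subtracts
`c P(t^d)`, and the product over `c ∈ F` is `P^q - P(t^d)^(q-1) P`. -/
theorem spanPoly_additive (hF : Fintype.card F = p ^ e) (t : L) (d : ℕ) :
    ∃ a : ℕ → L, spanPoly F t d = ∑ i ∈ range (d + 1), C (a i) * X ^ (Fintype.card F) ^ i := by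
  induction d with
  | zero => exact ⟨1, by simp [spanPoly, evT]⟩
  | succ d ih =>
    obtain ⟨a, ha⟩ := ih
    set q := Fintype.card F with hq
    have hlin : ∀ (c : F) (y : L), (spanPoly F t d).comp (X - C (algebraMap F L c * y)) =
        spanPoly F t d - C (algebraMap F L c) * C ((spanPoly F t d).eval y) := by
      intro c y
      have hc : ∀ i, (algebraMap F L c) ^ q ^ i = algebraMap F L c := by
        intro i; rw [← map_pow, hq, FiniteField.pow_card_pow]
      rw [ha]
      simp only [Polynomial.sum_comp, Polynomial.mul_comp, C_comp, pow_comp, X_comp, eval_finsetSum, eval_mul,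
        eval_C, eval_pow, eval_X, map_sum, Finset.mul_sum, ← Finset.sum_sub_distrib]
      refine Finset.sum_congr rfl fun i _ => ?_
      have : (X - C (algebraMap F L c * y)) ^ q ^ i = X ^ q ^ i - C (algebraMap F L c * y ^ q ^ i) := by
        have := sub_pow_char_pow (p := p) (n := e * i) (X : L[X]) (C (algebraMap F L c * y))
        rw [pow_mul, ← hF] at this
        rw [this, ← C_pow, mul_pow, hc]
      rw [this]
      simp only [map_mul]
      ring
    have hstep : spanPoly F t (d + 1) = spanPoly F t d ^ q -
        C ((spanPoly F t d).eval (t ^ d)) ^ (q - 1) * spanPoly F t d := by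
      rw [← prod_sub_smul, spanPoly, prod_fin_succ]
      refine Finset.prod_congr rfl fun c _ => ?_
      rw [← hlin, spanPoly, Polynomial.prod_comp]
      refine Finset.prod_congr rfl fun v _ => ?_
      rw [evT_succ]
      simp only [sub_comp, X_comp, C_comp, map_add]
      ring
    set w := (spanPoly F t d).eval (t ^ d)
    refine ⟨fun i => (if i = 0 then 0 else a (i - 1) ^ q) -
      (if i = d + 1 then 0 else w ^ (q - 1) * a i), ?_⟩
    rw [hstep, ha]
    simp only [C_sub, sub_mul, Finset.sum_sub_distrib]
    congr 1
    · rw [Finset.sum_range_succ' _ (d + 1), hF, sum_pow_char_pow]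
      simp [mul_pow, ← pow_mul, pow_succ]
    · rw [Finset.sum_range_succ _ (d + 1)]
      simp only [if_true, C_0, zero_mul, add_zero, Finset.mul_sum]
      refine Finset.sum_congr rfl fun i hi => ?_
      rw [if_neg (by simp at hi; omega)]
      simp [mul_assoc]

/-- The power series with constant term `1` and `n`-th coefficient `-∑ a⁻ⁿ` for `n ≥ 1`, over the
nonzero `a` in the `F`-span of `1, t, ..., t^(d-1)`. The sum is written over all `a`, the term
`a = 0` being `0` by `0⁻¹ = 0`. -/
noncomputable def genG (F : Type*) {L : Type*} [Field F] [Fintype F] [Field L] [Algebra F L]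
    (t : L) (d : ℕ) : PowerSeries L :=
  PowerSeries.mk fun n => if n = 0 then 1 else - ∑ v : Fin d → F, ((evT t d v)⁻¹) ^ n

/-- If `1, t, ..., t^(d-1)` are independent, `genG` is `X / f` for a linearized `f` with linear
coefficient `1`, namely `f = P / P'(0)` with `P = spanPoly F t d`. Indeed `P'` is the constant
`a 0`, while `genG` is the sum over all `a` of `X / (X - a)`, so that `P * genG = X * P'` by the
logarithmic derivative of a product. -/
theorem exists_linPoly_mul_genG (hF : Fintype.card F = p ^ e) (he : e ≠ 0) (t : L) (d : ℕ)
    (ht : ∀ v : Fin d → F, evT t d v = 0 → v = 0) :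
    ∃ c : ℕ → L, (linPoly (p ^ e) d c : PowerSeries L) * genG F t d = PowerSeries.X := by
  classical
  obtain ⟨a, ha⟩ := spanPoly_additive p e hF t d
  have hq : 1 < Fintype.card F := Fintype.one_lt_card
  have h0 : (Fintype.card F : L) = 0 := by
    rw [hF]; simp [he]
  have hder : derivative (spanPoly F t d) = C (a 0) := by
    rw [ha, Finset.sum_range_succ', map_add, map_sum, Finset.sum_eq_zero]
    · simp
    · intro i _
      rw [derivative_C_mul, derivative_X_pow]
      simp [h0]
  have hder2 := derivative_prod_finset (s := univ) (f := fun v : Fin d → F => X - C (evT t d v))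
  change derivative (spanPoly F t d) = _ at hder2
  rw [hder] at hder2
  simp only [derivative_sub, derivative_X, derivative_C, sub_zero, mul_one] at hder2
  have ha0 : a 0 ≠ 0 := by
    have h := congrArg (eval 0) hder2
    rw [eval_C, eval_finsetSum, Finset.sum_eq_single 0] at h
    · rw [h, eval_prod, Finset.prod_ne_zero_iff]
      intro v hv
      simp only [eval_sub, eval_X, eval_C, zero_sub, ne_eq, neg_eq_zero]
      exact fun h' => (Finset.mem_erase.1 hv).1 (ht v h')
    · intro v _ hv
      rw [eval_prod, Finset.prod_eq_zero (i := 0)]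
      · simp [hv.symm]
      · simp [evT_zero]
    · simp
  have hG : (spanPoly F t d : PowerSeries L) * genG F t d = PowerSeries.C (a 0) * PowerSeries.X := by
    -- `g v` is the expansion of `X / (X - a)` at `0`, for `a = evT t d v`.
    let g : (Fin d → F) → PowerSeries L := fun v =>
      if v = 0 then 1 else - PowerSeries.mk (fun n => if n = 0 then 0 else (evT t d v)⁻¹ ^ n)
    have hsum : genG F t d = ∑ v, g v := by
      ext n
      rw [map_sum, genG, PowerSeries.coeff_mk, ← Finset.add_sum_erase _ _ (mem_univ (0 : Fin d → F)),
        ← Finset.add_sum_erase univ (fun v => (PowerSeries.coeff n) (g v)) (mem_univ (0 : Fin d → F))]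
      have hg : ∀ v ∈ univ.erase (0 : Fin d → F), PowerSeries.coeff n (g v) =
          - if n = 0 then 0 else (evT t d v)⁻¹ ^ n := by
        intro v hv
        simp only [g, if_neg (Finset.mem_erase.1 hv).1, map_neg, PowerSeries.coeff_mk]
      rw [Finset.sum_congr rfl hg]
      by_cases hn : n = 0
      · simp [hn, g]
      · simp [hn, g, evT_zero, PowerSeries.coeff_one]
    have hterm : ∀ v, ((X - C (evT t d v) : L[X]) : PowerSeries L) * g v = PowerSeries.X := by
      intro v
      by_cases hv : v = 0
      · simp [hv, g, evT_zero]
      · have hne : evT t d v ≠ 0 := fun h => hv (ht v h)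
        simp only [g, if_neg hv]
        rw [Polynomial.coe_sub, Polynomial.coe_X, Polynomial.coe_C, mul_neg, sub_mul]
        ext n
        rcases n with _ | n
        · simp
        · rw [map_neg, map_sub, PowerSeries.coeff_succ_X_mul, PowerSeries.coeff_C_mul,
            PowerSeries.coeff_mk, PowerSeries.coeff_mk, PowerSeries.coeff_X]
          by_cases hn : n = 0
          · simp [hn, hne]
          · simp only [hn, if_false, Nat.add_eq_zero_iff, false_and, Nat.add_eq_right]
            rw [pow_succ]; field_simp; ring
    rw [hsum, Finset.mul_sum, ← Polynomial.coe_C, hder2, ← Polynomial.coeToPowerSeries.ringHom_apply,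
      ← Polynomial.coeToPowerSeries.ringHom_apply, map_sum, Finset.sum_mul]
    refine Finset.sum_congr rfl fun v _ => ?_
    rw [spanPoly, ← Finset.mul_prod_erase _ _ (mem_univ v), map_mul, mul_right_comm,
      Polynomial.coeToPowerSeries.ringHom_apply, hterm, mul_comm]
  refine ⟨fun i => (a 0)⁻¹ * a (i + 1), ?_⟩
  have h1 : linPoly (p ^ e) d (fun i => (a 0)⁻¹ * a (i + 1)) = C (a 0)⁻¹ * spanPoly F t d := by
    rw [ha, Finset.sum_range_succ', linPoly, hF, mul_add, add_comm, Finset.mul_sum]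
    congr 1
    · simp [mul_assoc]
    · rw [← mul_assoc, ← C_mul]; simp [ha0]
  rw [h1, Polynomial.coe_mul, mul_assoc, hG, Polynomial.coe_C, ← mul_assoc, ← map_mul]
  simp [ha0]

/-- A polynomial of degree exactly `d` is a nonzero scalar times a monic one. When `q - 1 ∣ n` the
`q - 1` scalars contribute equally to the sum of `n`-th inverse powers, and `q - 1 = -1` in `L`. -/
theorem sum_inv_evT_succ (t : L) (d n : ℕ) (hn : n ≠ 0) (hdvd : (Fintype.card F - 1) ∣ n) :
    ∑ v : Fin (d + 1) → F, ((evT t (d + 1) v)⁻¹) ^ n =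
      ∑ v : Fin d → F, ((evT t d v)⁻¹) ^ n - ∑ v : Fin d → F, ((t ^ d + evT t d v)⁻¹) ^ n := by
  classical
  have h1 : ∀ c ∈ univ.erase (0 : F), ∑ v : Fin d → F, ((evT t (d + 1) (Fin.snoc v c))⁻¹) ^ n =
      ∑ v : Fin d → F, ((t ^ d + evT t d v)⁻¹) ^ n := by
    intro c hc
    have hc0 : c ≠ 0 := (Finset.mem_erase.1 hc).1
    rw [← Equiv.sum_comp (MulAction.toPerm (Units.mk0 c hc0) : Equiv.Perm (Fin d → F))]
    refine Finset.sum_congr rfl fun v _ => ?_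
    have : (MulAction.toPerm (Units.mk0 c hc0) : Equiv.Perm (Fin d → F)) v = c • v := rfl
    rw [this, evT_succ, evT_smul, ← mul_add, mul_inv, mul_pow, add_comm]
    have : c ^ n = 1 := by
      obtain ⟨m, rfl⟩ := hdvd
      rw [pow_mul, FiniteField.pow_card_sub_one_eq_one c hc0, one_pow]
    rw [← map_inv₀, ← map_pow, inv_pow, this]
    simp
  have h0 : (Fintype.card F : L) = 0 := by
    rw [← map_natCast (algebraMap F L), FiniteField.cast_card_eq_zero, map_zero]
  rw [sum_fin_succ, ← Finset.add_sum_erase _ _ (mem_univ (0 : F)), Finset.sum_congr rfl h1,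
    Finset.sum_const, card_erase_of_mem (mem_univ _), card_univ, nsmul_eq_mul,
    Nat.cast_sub Fintype.card_pos, h0]
  simp [evT_succ, sub_eq_add_neg]

end

/-! ### The truncated power sums as coefficients of the generating series -/

section

/-- The coefficients of `genG` at multiples of `q - 1` are power sums over monic polynomials of
degree `< d`. At `n = 0` both sides are `1`, since `q^e = 0` in `L` for `e ≥ 1`. -/
theorem coeff_genG {F L : Type*} [Field F] [Field L] [Algebra F L] [Fintype F]
    (t : L) (d n : ℕ) (hd : 1 ≤ d) (hdvd : (Fintype.card F - 1) ∣ n) :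
    PowerSeries.coeff n (genG F t d) =
      ∑ e ∈ range d, ∑ v : Fin e → F, ((t ^ e + evT t e v)⁻¹) ^ n := by
  have h0 : (Fintype.card F : L) = 0 := by
    rw [← map_natCast (algebraMap F L), FiniteField.cast_card_eq_zero, map_zero]
  rw [genG, PowerSeries.coeff_mk]
  split_ifs with hn
  · subst hn
    obtain ⟨d, rfl⟩ := Nat.exists_eq_succ_of_ne_zero (show d ≠ 0 by omega)
    rw [Finset.sum_range_succ']
    simp [h0]
  · clear hd
    induction d with
    | zero => simp [evT, hn]
    | succ d ih =>
      rw [sum_inv_evT_succ t d n hn hdvd, Finset.sum_range_succ, ← ih]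
      ring

theorem algebraMap_mul_tL_pow (F : Type) [Field F] (a : F) (n : ℕ) :
    algebraMap F (LaurentSeries F) a * tL F ^ n = HahnSeries.single (-(n : ℤ)) a := by
  have : algebraMap F (LaurentSeries F) a = HahnSeries.single 0 a := by
    rw [LaurentSeries.algebraMap_apply]
    rfl
  rw [this, tL, HahnSeries.single_pow, HahnSeries.single_mul_single]
  simp

theorem eq_zero_of_evT_tL (F : Type) [Field F] (d : ℕ) (v : Fin d → F)
    (h : evT (tL F) d v = 0) : v = 0 := by
  funext j
  have h1 := congrArg (fun x : LaurentSeries F => x.coeff (-(j : ℤ))) h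
  simp only [evT, algebraMap_mul_tL_pow, HahnSeries.coeff_sum, HahnSeries.coeff_zero] at h1
  rw [Finset.sum_eq_single j] at h1
  · simpa using h1
  · intro i _ hij
    exact HahnSeries.coeff_single_of_ne (by
      intro h; apply hij; ext; omega)
  · simp

theorem mpoly_eq (F : Type) [Field F] [Fintype F] (d : ℕ) (v : Fin d → F) :
    mpoly F d v = tL F ^ d + evT (tL F) d v := by
  simp [mpoly, evT]

theorem Slt_eq_coeff_genG (F : Type) [Field F] [Fintype F] (d n : ℕ) (hd : 1 ≤ d)
    (hdvd : (Fintype.card F - 1) ∣ n) :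
    Slt F d n = PowerSeries.coeff n (genG F (tL F) d) := by
  rw [coeff_genG (tL F) d n hd hdvd]
  simp only [Slt, S, mpoly_eq]

end

/-- Factorization of S_{<d}(Σ (q^k - q^{k_i})) for 1 ≤ s ≤ q, k_i ≤ k. -/
theorem Slt_factorization (F : Type) [Field F] [Fintype F] (q : ℕ) (hq : q = Fintype.card F)
    (s k d : ℕ) (hs1 : 1 ≤ s) (hs2 : s ≤ q) (ki : Fin s → ℕ) (hki : ∀ i, ki i ≤ k)
    (hd : 1 ≤ d) :
    Slt F d (∑ i, (q ^ k - q ^ ki i)) = ∏ i, Slt F d (q ^ k - q ^ ki i) := by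
  obtain ⟨p, hp⟩ := CharP.exists F
  obtain ⟨e, hprime, hcard⟩ := FiniteField.card F p
  have : Fact p.Prime := ⟨hprime⟩
  have : CharP (LaurentSeries F) p :=
    charP_of_injective_algebraMap (algebraMap F (LaurentSeries F)).injective p
  have hdvd : ∀ i, (Fintype.card F - 1) ∣ q ^ k - q ^ ki i := by
    intro i
    obtain ⟨u, hu⟩ := Nat.exists_eq_add_of_le (hki i)
    rw [← hq, hu, pow_add, ← Nat.mul_sub_one]
    exact Dvd.dvd.mul_left (Nat.sub_one_dvd_pow_sub_one q _) _
  obtain ⟨c, hc⟩ := exists_linPoly_mul_genG p e hcard e.ne_zero (tL F) d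
    (eq_zero_of_evT_tL F d)
  rw [Slt_eq_coeff_genG F d _ hd (Finset.dvd_sum fun i _ => hdvd i),
    Finset.prod_congr rfl fun i _ => Slt_eq_coeff_genG F d _ hd (hdvd i)]
  have hqe : q = p ^ (e : ℕ) := hq.trans hcard
  subst hqe
  exact coeff_factorization p e e.ne_zero d s k hs1 hs2 c _ hc ki hki
end
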